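/- arXiv:1304.4883 — 4 statements merged into one kernel-verified Lean document; each statement's English description precedes it below -/
import Mathlib

section
/- Let Ω ⊂ ℝ^N (N ≥ 1) be a bounded domain, let Ω₀ be a domain with Ω̄₀ ⊂ Ω, and set Ω₁ := Ω ∖ Ω̄₀. Let b : Ω₁ → [0,∞) be bounded continuous, let f satisfy H1 with constants k₂ > 0 and p ∈ (0,1), and let M > 0. Suppose w, θ, ψ ∈ C(Ω̄₁) ∩ C²(Ω₁) satisfy: -Δw = -b f(w) in Ω₁ with 0 ≤ w ≤ M in Ω₁, w = 0 on ∂Ω and w = M on ∂Ω₀; Δθ = 0 in Ω₁ with θ = 0 on ∂Ω and θ = 1 on ∂Ω₀; and -Δψ = b in Ω₁ with ψ = 0 on ∂Ω₁. Then w ≥ Mθ - k₂ M^p ψ in Ω₁. In particular, if in addition there are constants c₁, c₂ > 0 with θ ≥ c₂ δ_{Ω₁} and ψ ≤ c₁ δ_{Ω₁} in Ω₁, and if c₂ M > c₁ k₂ M^p, then w ≥ (c₂ M − c₁ k₂ M^p) δ_{Ω₁} > 0 in Ω₁. (Positivity claim from the proof of Theorem 3.1, with b playing the role of m⁻.) 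-/
/-!
The function `v = w - Mθ + k₂ M^p ψ` satisfies `Δv = b (f(w) - k₂ M^p) ≤ 0` in `Ω₁ = Ω ∖ Ω̄₀`,
because `f(w) ≤ k₂ w^p ≤ k₂ M^p`, and it vanishes on `∂Ω₁ ⊆ ∂Ω ∪ ∂Ω₀`. The weak minimum principle
(`nonneg_of_lap_nonpos`) gives `v ≥ 0`, which is the first claim. The second follows by inserting
the bounds on `θ` and `ψ`; strict positivity holds since a nonempty bounded open set in `ℝ^N`,
`N ≥ 1`, has nonempty boundary, so that the distance to it is positive inside.

The minimum principle is proved by perturbation: if `u(x₀) < 0`, then for small `ε > 0` the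
function `u - ε‖x‖²`, whose Laplacian is strictly negative, attains its minimum over the closure at
an interior point, where the second derivative test makes every pure second partial derivative
nonnegative (`lap_nonneg_of_isLocalMin`).
-/

open MeasureTheory Metric Set Bornology

/-- The Laplacian of `u : ℝ^N → ℝ`, as the sum of the second partial derivatives. -/
noncomputable def lap {N : ℕ} (u : EuclideanSpace ℝ (Fin N) → ℝ)
    (x : EuclideanSpace ℝ (Fin N)) : ℝ :=
  ∑ i : Fin N,
    fderiv ℝ (fun y => fderiv ℝ u y (EuclideanSpace.single i 1)) x (EuclideanSpace.single i 1)

/-- Hypothesis H1: `f : [0,∞) → [0,∞)` is continuous, nondecreasing, and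
`k₁ ξ^p ≤ f ξ ≤ k₂ ξ^p` for all `ξ ≥ 0`, with `k₁, k₂ > 0` and `p ∈ (0,1)`. -/
def SatisfiesH1 (f : ℝ → ℝ) (k₁ k₂ p : ℝ) : Prop :=
  ContinuousOn f (Set.Ici 0) ∧ MonotoneOn f (Set.Ici 0) ∧
  0 < k₁ ∧ 0 < k₂ ∧ 0 < p ∧ p < 1 ∧
  ∀ ξ : ℝ, 0 ≤ ξ → k₁ * ξ ^ p ≤ f ξ ∧ f ξ ≤ k₂ * ξ ^ p

open InnerProductSpace in
/-- For `C²` functions `lap` is Mathlib's Laplacian, whose linearity is thereby available. -/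
lemma lap_eq_laplacian {N : ℕ} {u : EuclideanSpace ℝ (Fin N) → ℝ} {x : EuclideanSpace ℝ (Fin N)}
    (hu : ContDiffAt ℝ 2 u x) : lap u x = Laplacian.laplacian u x := by
  have hd : DifferentiableAt ℝ (fderiv ℝ u) x :=
    (hu.fderiv_right (m := 1) (by norm_num)).differentiableAt (by norm_num)
  rw [laplacian_eq_iteratedFDeriv_orthonormalBasis u (EuclideanSpace.basisFun (Fin N) ℝ)]
  refine Finset.sum_congr rfl fun i _ => ?_
  rw [iteratedFDeriv_two_apply, fderiv_clm_apply hd (differentiableAt_const _)]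
  simp

lemma lap_add {N : ℕ} {u v : EuclideanSpace ℝ (Fin N) → ℝ} {x : EuclideanSpace ℝ (Fin N)}
    (hu : ContDiffAt ℝ 2 u x) (hv : ContDiffAt ℝ 2 v x) :
    lap (fun y => u y + v y) x = lap u x + lap v x := by
  rw [lap_eq_laplacian (hu.add hv), lap_eq_laplacian hu, lap_eq_laplacian hv]
  exact hu.laplacian_add hv

lemma lap_const_mul {N : ℕ} {u : EuclideanSpace ℝ (Fin N) → ℝ} {x : EuclideanSpace ℝ (Fin N)}
    (c : ℝ) (hu : ContDiffAt ℝ 2 u x) : lap (fun y => c * u y) x = c * lap u x := by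
  rw [lap_eq_laplacian (contDiffAt_const.mul hu), lap_eq_laplacian hu]
  exact InnerProductSpace.laplacian_smul c hu

lemma lap_norm_sq {N : ℕ} (x : EuclideanSpace ℝ (Fin N)) :
    lap (fun y : EuclideanSpace ℝ (Fin N) => ‖y‖ ^ 2) x = 2 * N := by
  have h : ∀ i : Fin N, fderiv ℝ (fun y => fderiv ℝ
      (fun y : EuclideanSpace ℝ (Fin N) => ‖y‖ ^ 2) y (EuclideanSpace.single i 1)) x
      (EuclideanSpace.single i 1) = 2 := by
    intro i
    have e : (fun y => fderiv ℝ (fun y : EuclideanSpace ℝ (Fin N) => ‖y‖ ^ 2) y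
        (EuclideanSpace.single i 1)) =
        ⇑((2 : ℝ) • innerSL ℝ (EuclideanSpace.single i (1 : ℝ))) := by
      funext y
      rw [fderiv_norm_sq_apply]
      simp [real_inner_comm]
    rw [e, ContinuousLinearMap.fderiv]
    simp
  simp only [lap, h]
  simp [mul_comm]

/-- If `g''(a) < 0` at a local minimum, the second derivative test makes `a` a local maximum as
well, so `g` is locally constant and `g''(a) = 0`. -/
lemma deriv_deriv_nonneg_of_isLocalMin {g : ℝ → ℝ} {a : ℝ} (hg : ContinuousAt g a)
    (hmin : IsLocalMin g a) : 0 ≤ deriv (deriv g) a := by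
  by_contra! hneg
  have hmax := isLocalMax_of_deriv_deriv_neg hneg hmin.deriv_eq_zero hg
  have hconst : g =ᶠ[nhds a] fun _ => g a := by
    filter_upwards [hmin, hmax] with t h₁ h₂ using le_antisymm h₂ h₁
  rw [hconst.deriv.deriv_eq] at hneg
  simp at hneg

lemma lap_nonneg_of_isLocalMin {N : ℕ} {u : EuclideanSpace ℝ (Fin N) → ℝ}
    {x : EuclideanSpace ℝ (Fin N)} (hu : ContDiffAt ℝ 2 u x) (hmin : IsLocalMin u x) :
    0 ≤ lap u x := by
  refine Finset.sum_nonneg fun i _ => ?_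
  set e : EuclideanSpace ℝ (Fin N) := EuclideanSpace.single i 1
  -- `ℓ` is the line through `x` in direction `e`; the `i`-th second partial is `(u ∘ ℓ)''(0)`.
  set ℓ : ℝ → EuclideanSpace ℝ (Fin N) := fun t => x + t • e with hℓ
  have hℓ0 : ℓ 0 = x := by simp [hℓ]
  have hℓd : ∀ t, HasDerivAt ℓ e t := fun t => by
    have h := ((hasDerivAt_id t).smul_const e).const_add x
    rw [one_smul] at h
    exact h
  have hℓc : Filter.Tendsto ℓ (nhds 0) (nhds x) := by
    have h := (hℓd 0).continuousAt
    rwa [ContinuousAt, hℓ0] at h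
  have hdiff : ∀ᶠ y in nhds x, DifferentiableAt ℝ u y :=
    (hu.eventually (by simp)).mono fun y hy => hy.differentiableAt (by norm_num)
  have hd : DifferentiableAt ℝ (fun y => fderiv ℝ u y e) x :=
    ((hu.fderiv_right (m := 1) (by norm_num)).differentiableAt (by norm_num)).clm_apply
      (differentiableAt_const _)
  have hfirst : deriv (u ∘ ℓ) =ᶠ[nhds 0] fun t => fderiv ℝ u (ℓ t) e := by
    filter_upwards [hℓc.eventually hdiff] with t ht
    exact (ht.hasFDerivAt.comp_hasDerivAt t (hℓd t)).deriv
  have hsecond : deriv (deriv (u ∘ ℓ)) 0 = fderiv ℝ (fun y => fderiv ℝ u y e) x e := by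
    rw [hfirst.deriv_eq]
    rw [← hℓ0] at hd
    have := (hd.hasFDerivAt.comp_hasDerivAt (0 : ℝ) (hℓd 0)).deriv
    rw [hℓ0] at this
    exact this
  rw [← hsecond]
  refine deriv_deriv_nonneg_of_isLocalMin ?_ ?_
  · refine ContinuousAt.comp ?_ (hℓd 0).continuousAt
    rw [hℓ0]
    exact hu.continuousAt
  · have h := hℓc.eventually hmin
    filter_upwards [h] with t ht
    simpa [hℓ0] using ht

/-- Weak minimum principle for superharmonic functions on a bounded open set. -/
lemma nonneg_of_lap_nonpos {N : ℕ} (hN : 1 ≤ N) {U : Set (EuclideanSpace ℝ (Fin N))}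
    (hUo : IsOpen U) (hUb : IsBounded U) {u : EuclideanSpace ℝ (Fin N) → ℝ}
    (hcont : ContinuousOn u (closure U)) (hC2 : ContDiffOn ℝ 2 u U)
    (hlap : ∀ x ∈ U, lap u x ≤ 0) (hbc : ∀ x ∈ frontier U, 0 ≤ u x) :
    ∀ x ∈ U, 0 ≤ u x := by
  intro x₀ hx₀
  by_contra! hneg
  obtain ⟨R, hR⟩ := hUb.closure.exists_norm_le
  -- This `ε` makes `u(x₀) + ε R² < 0`, so `u - ε‖x‖²` is smaller at `x₀` than on the boundary.
  obtain ⟨ε, hε, hεR⟩ : ∃ ε : ℝ, 0 < ε ∧ ε * R ^ 2 < -u x₀ := by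
    refine ⟨-u x₀ / (R ^ 2 + 1), by apply div_pos <;> nlinarith [sq_nonneg R], ?_⟩
    rw [div_mul_eq_mul_div, div_lt_iff₀ (by positivity)]
    nlinarith
  have hnorm : ContDiff ℝ 2 fun y : EuclideanSpace ℝ (Fin N) => ‖y‖ ^ 2 := contDiff_norm_sq ℝ
  set v : EuclideanSpace ℝ (Fin N) → ℝ := fun y => u y + (-ε) * ‖y‖ ^ 2 with hv
  have hvc : ContinuousOn v (closure U) :=
    hcont.add (continuous_const.mul hnorm.continuous).continuousOn
  obtain ⟨y, hy, hmin⟩ := hUb.isCompact_closure.exists_isMinOn ⟨x₀, subset_closure hx₀⟩ hvc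
  have hle : v y ≤ v x₀ := hmin (subset_closure hx₀)
  have hyR : ‖y‖ ^ 2 ≤ R ^ 2 := pow_le_pow_left₀ (norm_nonneg _) (hR y hy) 2
  have hyU : y ∈ U := by
    by_contra hyU
    have h0 := hbc y (by rw [frontier, hUo.interior_eq]; exact ⟨hy, hyU⟩)
    simp only [hv] at hle
    nlinarith [sq_nonneg ‖x₀‖]
  have hyn : U ∈ nhds y := hUo.mem_nhds hyU
  have huy : ContDiffAt ℝ 2 u y := hC2.contDiffAt hyn
  have hqy : ContDiffAt ℝ 2 (fun y : EuclideanSpace ℝ (Fin N) => (-ε) * ‖y‖ ^ 2) y :=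
    contDiffAt_const.mul hnorm.contDiffAt
  have hpos : 0 ≤ lap v y := lap_nonneg_of_isLocalMin (huy.add hqy)
    (hmin.isLocalMin (Filter.mem_of_superset hyn subset_closure))
  rw [hv, lap_add huy hqy, lap_const_mul _ hnorm.contDiffAt, lap_norm_sq] at hpos
  have hN' : (1 : ℝ) ≤ N := by exact_mod_cast hN
  nlinarith [hlap y hyU]

/-- **Positivity claim in the proof of Theorem 3.1.** With `Ω₁ := Ω ∖ Ω̄₀`, if
`-Δw = -b f(w)` in `Ω₁` with `0 ≤ w ≤ M`, `w = 0` on `∂Ω`, `w = M` on `∂Ω₀`; `θ` is harmonic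
with `θ = 0` on `∂Ω`, `θ = 1` on `∂Ω₀`; and `-Δψ = b` with `ψ = 0` on `∂Ω₁`; then
`w ≥ Mθ - k₂ M^p ψ` in `Ω₁`. In particular, if moreover `θ ≥ c₂ δ_{Ω₁}` and `ψ ≤ c₁ δ_{Ω₁}`
with `c₂ M > c₁ k₂ M^p`, then `w ≥ (c₂M − c₁k₂M^p) δ_{Ω₁} > 0` in `Ω₁`. -/
theorem positivity_of_w {N : ℕ} (hN : 1 ≤ N)
    (Ω Ω₀ : Set (EuclideanSpace ℝ (Fin N)))
    (hΩopen : IsOpen Ω) (hΩconn : IsConnected Ω) (hΩbdd : IsBounded Ω)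
    (hΩ₀open : IsOpen Ω₀) (hΩ₀conn : IsConnected Ω₀) (hΩ₀sub : closure Ω₀ ⊆ Ω)
    (b : EuclideanSpace ℝ (Fin N) → ℝ)
    (hbcont : ContinuousOn b (Ω \ closure Ω₀)) (hbnonneg : ∀ x ∈ Ω \ closure Ω₀, 0 ≤ b x)
    (hbbdd : ∃ C : ℝ, ∀ x ∈ Ω \ closure Ω₀, b x ≤ C)
    (f : ℝ → ℝ) (k₁ k₂ p : ℝ) (hf : SatisfiesH1 f k₁ k₂ p)
    (M : ℝ) (hM : 0 < M)
    (w θ ψ : EuclideanSpace ℝ (Fin N) → ℝ)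
    (hwcont : ContinuousOn w (closure (Ω \ closure Ω₀)))
    (hwC2 : ContDiffOn ℝ 2 w (Ω \ closure Ω₀))
    (hweq : ∀ x ∈ Ω \ closure Ω₀, -lap w x = -(b x * f (w x)))
    (hwbounds : ∀ x ∈ Ω \ closure Ω₀, 0 ≤ w x ∧ w x ≤ M)
    (hwbc1 : ∀ x ∈ frontier Ω, w x = 0) (hwbc2 : ∀ x ∈ frontier Ω₀, w x = M)
    (hθcont : ContinuousOn θ (closure (Ω \ closure Ω₀)))
    (hθC2 : ContDiffOn ℝ 2 θ (Ω \ closure Ω₀))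
    (hθeq : ∀ x ∈ Ω \ closure Ω₀, lap θ x = 0)
    (hθbc1 : ∀ x ∈ frontier Ω, θ x = 0) (hθbc2 : ∀ x ∈ frontier Ω₀, θ x = 1)
    (hψcont : ContinuousOn ψ (closure (Ω \ closure Ω₀)))
    (hψC2 : ContDiffOn ℝ 2 ψ (Ω \ closure Ω₀))
    (hψeq : ∀ x ∈ Ω \ closure Ω₀, -lap ψ x = b x)
    (hψbc : ∀ x ∈ frontier (Ω \ closure Ω₀), ψ x = 0) :
    (∀ x ∈ Ω \ closure Ω₀, M * θ x - k₂ * M ^ p * ψ x ≤ w x) ∧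
    (∀ c₁ c₂ : ℝ, 0 < c₁ → 0 < c₂ →
      (∀ x ∈ Ω \ closure Ω₀, c₂ * infDist x (frontier (Ω \ closure Ω₀)) ≤ θ x) →
      (∀ x ∈ Ω \ closure Ω₀, ψ x ≤ c₁ * infDist x (frontier (Ω \ closure Ω₀))) →
      c₁ * k₂ * M ^ p < c₂ * M →
      ∀ x ∈ Ω \ closure Ω₀,
        (c₂ * M - c₁ * k₂ * M ^ p) * infDist x (frontier (Ω \ closure Ω₀)) ≤ w x ∧
        0 < w x) := by
  obtain ⟨-, -, -, hk₂, hp, -, hfb⟩ := hf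
  set U := Ω \ closure Ω₀ with hU
  have hUo : IsOpen U := hΩopen.sdiff isClosed_closure
  have hUb : IsBounded U := hΩbdd.subset sdiff_subset
  have hfr : frontier U ⊆ frontier Ω ∪ frontier Ω₀ := by
    intro x hx
    rw [hU, sdiff_eq] at hx
    rcases frontier_inter_subset _ _ hx with h | h
    · exact Or.inl h.1
    · rw [frontier_compl] at h
      exact Or.inr (frontier_closure_subset h.2)
  have main : ∀ x ∈ U, M * θ x - k₂ * M ^ p * ψ x ≤ w x := by
    have key := nonneg_of_lap_nonpos hN hUo hUb
      (u := fun x => w x + ((-M) * θ x + (k₂ * M ^ p) * ψ x))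
      (hwcont.add ((continuousOn_const.mul hθcont).add (continuousOn_const.mul hψcont)))
      (hwC2.add ((contDiffOn_const.mul hθC2).add (contDiffOn_const.mul hψC2))) ?_ ?_
    · intro x hx
      have := key x hx
      linarith
    · intro x hx
      have hn : U ∈ nhds x := hUo.mem_nhds hx
      have hw := hwC2.contDiffAt hn
      have hθ := hθC2.contDiffAt hn
      have hψ := hψC2.contDiffAt hn
      rw [lap_add hw ((contDiffAt_const.mul hθ).add (contDiffAt_const.mul hψ)),
        lap_add (contDiffAt_const.mul hθ) (contDiffAt_const.mul hψ),
        lap_const_mul _ hθ, lap_const_mul _ hψ, hθeq x hx]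
      obtain ⟨hw0, hwM⟩ := hwbounds x hx
      have hfw : f (w x) ≤ k₂ * M ^ p := (hfb _ hw0).2.trans
        (mul_le_mul_of_nonneg_left (Real.rpow_le_rpow hw0 hwM hp.le) hk₂.le)
      have h1 : lap w x = b x * f (w x) := neg_injective (hweq x hx)
      have h2 : lap ψ x = -b x := by linarith [hψeq x hx]
      rw [h1, h2]
      nlinarith [mul_le_mul_of_nonneg_left hfw (hbnonneg x hx)]
    · intro x hx
      simp only [hψbc x hx]
      rcases hfr hx with h | h
      · simp [hwbc1 x h, hθbc1 x h]
      · simp [hwbc2 x h, hθbc2 x h]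
  refine ⟨main, fun c₁ c₂ _ _ hθδ hψδ hc x hx => ?_⟩
  have hle : (c₂ * M - c₁ * k₂ * M ^ p) * infDist x (frontier U) ≤ w x := by
    have hkM : 0 ≤ k₂ * M ^ p := by positivity
    have h1 := mul_le_mul_of_nonneg_left (hθδ x hx) hM.le
    have h2 := mul_le_mul_of_nonneg_left (hψδ x hx) hkM
    linarith [main x hx]
  refine ⟨hle, lt_of_lt_of_le (mul_pos (by linarith) ?_) hle⟩
  have : Nonempty (Fin N) := ⟨⟨0, hN⟩⟩
  have hne : (frontier U).Nonempty := by
    refine nonempty_frontier_iff.2 ⟨⟨x, hx⟩, fun h => ?_⟩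
    rw [h] at hUb
    exact NormedSpace.unbounded_univ ℝ (EuclideanSpace ℝ (Fin N)) hUb
  refine (isClosed_frontier.notMem_iff_infDist_pos hne).1 fun h => ?_
  rw [frontier, hUo.interior_eq] at h
  exact h.2 hx
end

section
/- Let Ω₀ ⊂ ℝ^N (N ≥ 1) be a bounded domain, let p ∈ (0,1) and c > 0, let m : Ω₀ → [0,∞) be measurable, and let v : Ω₀ → (0,∞) be measurable. Assume that the integrals I := ∫_{Ω₀} m v^p δ_{Ω₀} and J := ∫_{Ω₀} m δ_{Ω₀}^{1+p} are finite, and that v(x) ≥ c δ_{Ω₀}(x) · I for all x ∈ Ω₀. Then v(x) ≥ (c J)^{1/(1-p)} δ_{Ω₀}(x) for all x ∈ Ω₀. (Lower-bound bootstrap from the proof of Theorem 3.1.) -/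
/-!
Write `δ` for the distance to the boundary, and `I`, `J` for the integrals of `m v^p δ` and
`m δ^(1+p)`. Inserting `v ≥ c I δ` into the definition of `I` gives `I ≥ (c I)^p J`
(`hmono`). If `I > 0`, this rearranges to `c I ≥ (c J)^(1/(1-p))`, and the claim is
`v ≥ c I δ` again. If `I = 0`, then `m δ = 0` almost everywhere because `v > 0`, so `J = 0`
(`hzero`) and the claimed lower bound is `0`.
-/


open MeasureTheory Metric Set Bornology

/-- **Lower-bound bootstrap (proof of Theorem 3.1).** If `v ≥ c δ_{Ω₀} ∫_{Ω₀} m v^p δ_{Ω₀}`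
in `Ω₀`, then `v ≥ (c ∫_{Ω₀} m δ_{Ω₀}^{1+p})^{1/(1-p)} δ_{Ω₀}` in `Ω₀`. -/
theorem lower_bound_bootstrap {N : ℕ} (hN : 1 ≤ N)
    (Ω₀ : Set (EuclideanSpace ℝ (Fin N)))
    (hΩ₀open : IsOpen Ω₀) (hΩ₀conn : IsConnected Ω₀) (hΩ₀bdd : IsBounded Ω₀)
    (p c : ℝ) (hp : 0 < p) (hp1 : p < 1) (hc : 0 < c)
    (m v : EuclideanSpace ℝ (Fin N) → ℝ)
    (hmmeas : Measurable m) (hmnonneg : ∀ x ∈ Ω₀, 0 ≤ m x)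
    (hvmeas : Measurable v) (hvpos : ∀ x ∈ Ω₀, 0 < v x)
    (hI : IntegrableOn (fun x => m x * v x ^ p * infDist x (frontier Ω₀)) Ω₀)
    (hJ : IntegrableOn (fun x => m x * infDist x (frontier Ω₀) ^ (1 + p)) Ω₀)
    (hlow : ∀ x ∈ Ω₀,
      c * infDist x (frontier Ω₀) *
        (∫ y in Ω₀, m y * v y ^ p * infDist y (frontier Ω₀)) ≤ v x) :
    ∀ x ∈ Ω₀,
      (c * ∫ y in Ω₀, m y * infDist y (frontier Ω₀) ^ (1 + p)) ^ (1 / (1 - p)) *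
        infDist x (frontier Ω₀) ≤ v x := by
  have hδ : ∀ y, 0 ≤ infDist y (frontier Ω₀) := fun y => infDist_nonneg
  have hsplit : ∀ y, infDist y (frontier Ω₀) ^ (1 + p) =
      infDist y (frontier Ω₀) * infDist y (frontier Ω₀) ^ p := fun y =>
    Real.rpow_one_add' (hδ y) (by linarith)
  have hΩm : MeasurableSet Ω₀ := hΩ₀open.measurableSet
  have hnn : ∀ y ∈ Ω₀, 0 ≤ m y * v y ^ p * infDist y (frontier Ω₀) := fun y hy =>
    mul_nonneg (mul_nonneg (hmnonneg y hy) (Real.rpow_nonneg (hvpos y hy).le p)) (hδ y)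
  have hI0 : 0 ≤ ∫ y in Ω₀, m y * v y ^ p * infDist y (frontier Ω₀) :=
    setIntegral_nonneg hΩm hnn
  have hJ0 : 0 ≤ ∫ y in Ω₀, m y * infDist y (frontier Ω₀) ^ (1 + p) :=
    setIntegral_nonneg hΩm fun y hy =>
      mul_nonneg (hmnonneg y hy) (Real.rpow_nonneg (hδ y) _)
  have hzero : (∫ y in Ω₀, m y * v y ^ p * infDist y (frontier Ω₀)) = 0 →
      (∫ y in Ω₀, m y * infDist y (frontier Ω₀) ^ (1 + p)) = 0 := by
    intro h
    have hae := (setIntegral_eq_zero_iff_of_nonneg_ae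
      (ae_restrict_of_forall_mem hΩm hnn) hI).1 h
    refine integral_eq_zero_of_ae ?_
    filter_upwards [hae, ae_restrict_mem hΩm] with y hy hyΩ
    have hv : v y ^ p ≠ 0 := (Real.rpow_pos_of_pos (hvpos y hyΩ) p).ne'
    have hy' : m y * v y ^ p * infDist y (frontier Ω₀) = 0 := hy
    have hmδ : m y * infDist y (frontier Ω₀) = 0 := by
      have : v y ^ p * (m y * infDist y (frontier Ω₀)) = 0 := by linarith
      exact (mul_eq_zero.1 this).resolve_left hv
    change m y * infDist y (frontier Ω₀) ^ (1 + p) = 0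
    rw [hsplit, ← mul_assoc, hmδ, zero_mul]
  have hmono : (c * ∫ y in Ω₀, m y * v y ^ p * infDist y (frontier Ω₀)) ^ p *
      (∫ y in Ω₀, m y * infDist y (frontier Ω₀) ^ (1 + p)) ≤
      ∫ y in Ω₀, m y * v y ^ p * infDist y (frontier Ω₀) := by
    rw [← integral_const_mul]
    refine setIntegral_mono_on (hJ.const_mul _) hI hΩm fun y hy => ?_
    set I := ∫ y in Ω₀, m y * v y ^ p * infDist y (frontier Ω₀)
    have hvp : (c * I) ^ p * infDist y (frontier Ω₀) ^ p ≤ v y ^ p := by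
      rw [← Real.mul_rpow (mul_nonneg hc.le hI0) (hδ y)]
      refine Real.rpow_le_rpow (mul_nonneg (mul_nonneg hc.le hI0) (hδ y)) ?_ hp.le
      linarith [hlow y hy]
    rw [hsplit]
    have := mul_le_mul_of_nonneg_left hvp (mul_nonneg (hmnonneg y hy) (hδ y))
    linarith
  intro x hx
  have hlowx := hlow x hx
  set I := ∫ y in Ω₀, m y * v y ^ p * infDist y (frontier Ω₀)
  set J := ∫ y in Ω₀, m y * infDist y (frontier Ω₀) ^ (1 + p)
  have hp1' : 0 < 1 - p := by linarith
  rcases hI0.eq_or_lt with h | h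
  · rw [hzero h.symm, mul_zero, Real.zero_rpow (one_div_pos.2 hp1').ne', zero_mul]
    exact (hvpos x hx).le
  · have ht : 0 < c * I := mul_pos hc h
    -- Multiplying `(c I) ^ p * J ≤ I` by `c` and dividing by `(c I) ^ p`.
    have hcJ : c * J ≤ (c * I) ^ (1 - p) := by
      rw [Real.rpow_sub ht, Real.rpow_one, le_div_iff₀ (Real.rpow_pos_of_pos ht p)]
      linarith [mul_le_mul_of_nonneg_left hmono hc.le]
    have hroot : (c * J) ^ (1 / (1 - p)) ≤ c * I := by
      rw [one_div]
      exact (Real.rpow_inv_le_iff_of_pos (mul_nonneg hc.le hJ0) ht.le hp1').2 hcJ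
    linarith [mul_le_mul_of_nonneg_right hroot (hδ x)]
end

section
/- Let Ω ⊂ ℝ^N (N ≥ 1) be a bounded domain, let m : Ω → ℝ be continuous, and let f satisfy H1 with constants k₁, k₂ > 0 and p ∈ (0,1). Suppose u ∈ C(Ω̄) ∩ C²(Ω) satisfies -Δu = m f(u) in Ω, u > 0 in Ω, and u = 0 on ∂Ω. Then for every open ball B_R(x₀) ⊂ Ω on which m ≤ 0, one has k₁ C_{N,p} · (inf_{B_R(x₀)} m⁻) · R² < (sup_Ω u)^{1-p}. (Core estimate of Theorem 3.2.) -/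
/-!
The idea is to compare `u` on the ball with the explicit radial functions
`x ↦ (μ + B |x - x₀|²) ^ s`, where `s = 1 / (1 - p)` and `B = k₁ C_{N,p} inf m⁻`.

Suppose `(sup u) ^ (1 - p) ≤ B R²`. The function `u ^ (1 - p) - B |x - x₀|²` is positive at `x₀`
and nonpositive on the sphere, so its maximum `μ > 0` over the closed ball is attained at an
interior point `x₁`. Hence `u ≤ (μ + B |x - x₀|²) ^ s` on the ball with equality at `x₁`, and since
`μ > 0` the right-hand side is smooth even at `x₀`. The second derivative test in each coordinate
direction (`lap_le_of_touching`) bounds `Δu(x₁)` by the Laplacian of the barrier, which for `B > 0`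
is strictly below `(B / C_{N,p}) u(x₁) ^ p`. The equation, on the other hand, gives
`Δu(x₁) ≥ k₁ (inf m⁻) u(x₁) ^ p = (B / C_{N,p}) u(x₁) ^ p`, a contradiction.
The case `inf m⁻ = 0` is immediate from `sup u > 0`.
-/

open MeasureTheory Metric Set Bornology

/-- Necessary second-order condition at a local maximum on the line. -/
lemma second_deriv_nonpos_of_isLocalMax {g g' : ℝ → ℝ} {a g'' : ℝ}
    (hg : ∀ᶠ t in nhds a, HasDerivAt g (g' t) t) (hg' : HasDerivAt g' g'' a)
    (hmax : IsLocalMax g a) : g'' ≤ 0 := by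
  by_contra! hpos
  have heq : deriv g =ᶠ[nhds a] g' := hg.mono fun t ht => ht.deriv
  have h2 : deriv (deriv g) a = g'' := by rw [heq.deriv_eq, hg'.deriv]
  have hmin : IsLocalMin g a :=
    isLocalMin_of_deriv_deriv_pos (by rw [h2]; exact hpos) hmax.deriv_eq_zero
      hg.self_of_nhds.continuousAt
  -- A point that is both a local maximum and a local minimum has `g` locally constant there.
  have hconst : g =ᶠ[nhds a] fun _ => g a := by
    filter_upwards [hmin, hmax] with t h1 h3 using le_antisymm h3 h1
  have h0 : deriv (deriv g) a = 0 := by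
    rw [hconst.deriv.deriv_eq]; simp
  linarith

/-- The barrier `(μ + B |x - x₀|²) ^ s` restricted to a coordinate line is `(P + 2Bbt + Bt²) ^ s`;
if it touches `u` from above at `x`, its second derivative dominates that of `u`. -/
lemma second_partial_le {N : ℕ} {u : EuclideanSpace ℝ (Fin N) → ℝ}
    {x : EuclideanSpace ℝ (Fin N)} (hu : ContDiffAt ℝ 2 u x) (i : Fin N) {P B b s : ℝ} (hP : 0 < P)
    (hle : ∀ᶠ t : ℝ in nhds 0, u (x + t • EuclideanSpace.single i 1) ≤
      (P + 2 * B * b * t + B * t ^ 2) ^ s)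
    (heq : u x = P ^ s) :
    fderiv ℝ (fun y => fderiv ℝ u y (EuclideanSpace.single i 1)) x (EuclideanSpace.single i 1) ≤
      s * (s - 1) * P ^ (s - 2) * (2 * B * b) ^ 2 + s * P ^ (s - 1) * (2 * B) := by
  set e : EuclideanSpace ℝ (Fin N) := EuclideanSpace.single i 1 with he
  have hline : ∀ t : ℝ, HasDerivAt (fun t : ℝ => x + t • e) e t := fun t => by
    simpa using ((hasDerivAt_id t).smul_const e).const_add x
  have hl0 : x + (0 : ℝ) • e = x := by simp
  have htend : Filter.Tendsto (fun t : ℝ => x + t • e) (nhds 0) (nhds x) := by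
    have := (hline 0).continuousAt.tendsto
    rwa [hl0] at this
  have hu1 : ∀ᶠ t : ℝ in nhds 0,
      HasDerivAt (fun t : ℝ => u (x + t • e)) (fderiv ℝ u (x + t • e) e) t := by
    have h1 : ∀ᶠ y in nhds x, ContDiffAt ℝ 2 u y := hu.eventually (by simp)
    filter_upwards [htend.eventually h1] with t ht
    exact (ht.differentiableAt (by norm_num)).hasFDerivAt.comp_hasDerivAt t (hline t)
  have hu2 : HasDerivAt (fun t : ℝ => fderiv ℝ u (x + t • e) e)
      (fderiv ℝ (fun y => fderiv ℝ u y e) x e) 0 := by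
    have h1 : DifferentiableAt ℝ (fun y => fderiv ℝ u y e) x := by
      have : DifferentiableAt ℝ (fderiv ℝ u) x :=
        (hu.fderiv_right (m := 1) (by norm_num)).differentiableAt (by norm_num)
      exact this.clm_apply (differentiableAt_const e)
    have h2 : HasFDerivAt (fun y => fderiv ℝ u y e) (fderiv ℝ (fun y => fderiv ℝ u y e) x)
        (x + (0 : ℝ) • e) := by rw [hl0]; exact h1.hasFDerivAt
    exact h2.comp_hasDerivAt (0 : ℝ) (hline 0)
  have hq : ∀ t : ℝ, HasDerivAt (fun t : ℝ => P + 2 * B * b * t + B * t ^ 2)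
      (2 * B * b + 2 * B * t) t := fun t => by
    have := (((hasDerivAt_id t).const_mul (2 * B * b)).const_add P).add
      (((hasDerivAt_id t).pow 2).const_mul B)
    refine this.congr_deriv ?_
    simp; ring
  have hq' : HasDerivAt (fun t : ℝ => 2 * B * b + 2 * B * t) (2 * B) 0 := by
    simpa using ((hasDerivAt_id (0 : ℝ)).const_mul (2 * B)).const_add (2 * B * b)
  have hqpos : ∀ᶠ t : ℝ in nhds 0, 0 < P + 2 * B * b * t + B * t ^ 2 :=
    (hq 0).continuousAt.eventually (lt_mem_nhds (by simpa using hP))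
  have hw1 : ∀ᶠ t : ℝ in nhds 0, HasDerivAt (fun t : ℝ => (P + 2 * B * b * t + B * t ^ 2) ^ s)
      ((2 * B * b + 2 * B * t) * s * (P + 2 * B * b * t + B * t ^ 2) ^ (s - 1)) t := by
    filter_upwards [hqpos] with t ht
    exact (hq t).rpow_const (Or.inl ht.ne')
  have hw2 : HasDerivAt
      (fun t : ℝ => (2 * B * b + 2 * B * t) * s * (P + 2 * B * b * t + B * t ^ 2) ^ (s - 1))
      (s * (s - 1) * P ^ (s - 2) * (2 * B * b) ^ 2 + s * P ^ (s - 1) * (2 * B)) 0 := by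
    have h1 := (hq 0).rpow_const (p := s - 1) (Or.inl (by simpa using hP.ne'))
    refine ((hq'.mul_const s).mul h1).congr_deriv ?_
    rw [show s - 1 - 1 = s - 2 by ring]
    simp; ring
  have hmax : IsLocalMax
      (fun t : ℝ => u (x + t • e) - (P + 2 * B * b * t + B * t ^ 2) ^ s) 0 := by
    filter_upwards [hle] with t ht
    simp only [hl0, heq]
    simpa using ht
  have := second_deriv_nonpos_of_isLocalMax
    ((hu1.and hw1).mono fun t ht => ht.1.sub ht.2) (hu2.sub hw2) hmax
  linarith

/-- If `(μ + B |x - x₀|²) ^ s` touches `u` from above at `x`, then `Δu(x)` is at most the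
Laplacian of this barrier. -/
lemma lap_le_of_touching {N : ℕ} {u : EuclideanSpace ℝ (Fin N) → ℝ}
    {x x₀ : EuclideanSpace ℝ (Fin N)} (hu : ContDiffAt ℝ 2 u x) {μ B s : ℝ}
    (hP : 0 < μ + B * ‖x - x₀‖ ^ 2)
    (hle : ∀ᶠ y in nhds x, u y ≤ (μ + B * ‖y - x₀‖ ^ 2) ^ s)
    (heq : u x = (μ + B * ‖x - x₀‖ ^ 2) ^ s) :
    lap u x ≤ s * (s - 1) * (μ + B * ‖x - x₀‖ ^ 2) ^ (s - 2) * (4 * B ^ 2 * ‖x - x₀‖ ^ 2) +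
      N * (s * (μ + B * ‖x - x₀‖ ^ 2) ^ (s - 1) * (2 * B)) := by
  set P := μ + B * ‖x - x₀‖ ^ 2 with hPdef
  have key : ∀ i : Fin N, fderiv ℝ (fun y => fderiv ℝ u y (EuclideanSpace.single i 1)) x
      (EuclideanSpace.single i 1) ≤
      s * (s - 1) * P ^ (s - 2) * (2 * B * (x - x₀) i) ^ 2 + s * P ^ (s - 1) * (2 * B) := by
    intro i
    refine second_partial_le hu i hP ?_ heq
    have htend : Filter.Tendsto
        (fun t : ℝ => x + t • (EuclideanSpace.single i 1 : EuclideanSpace ℝ (Fin N)))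
        (nhds 0) (nhds x) := by
      have : Continuous
        (fun t : ℝ => x + t • (EuclideanSpace.single i 1 : EuclideanSpace ℝ (Fin N))) := by
        fun_prop
      simpa using this.tendsto 0
    filter_upwards [htend.eventually hle] with t ht
    refine ht.trans_eq ?_
    congr 1
    have hn : ‖x + t • (EuclideanSpace.single i 1 : EuclideanSpace ℝ (Fin N)) - x₀‖ ^ 2 =
        ‖x - x₀‖ ^ 2 + 2 * (x - x₀) i * t + t ^ 2 := by
      rw [add_sub_right_comm, norm_add_sq_real, inner_smul_right, norm_smul,
        EuclideanSpace.inner_single_right]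
      simp
      ring
    rw [hn, hPdef]; ring
  unfold lap
  refine (Finset.sum_le_sum fun i _ => key i).trans_eq ?_
  rw [Finset.sum_add_distrib, ← Finset.mul_sum]
  have h1 : ∑ i : Fin N, (2 * B * (x - x₀) i) ^ 2 = 4 * B ^ 2 * ‖x - x₀‖ ^ 2 := by
    rw [EuclideanSpace.real_norm_sq_eq, Finset.mul_sum]
    exact Finset.sum_congr rfl fun i _ => by ring
  rw [h1]
  simp

/-- **Core estimate of Theorem 3.2.** If `u` solves `-Δu = m f(u)` in `Ω`, `u > 0` in `Ω`,
`u = 0` on `∂Ω`, then for every ball `B_R(x₀) ⊆ Ω` on which `m ≤ 0` one has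
`k₁ C_{N,p} (inf_{B_R(x₀)} m⁻) R² < (sup_Ω u)^{1-p}`. -/
theorem core_estimate_thm32 {N : ℕ} (hN : 1 ≤ N)
    (Ω : Set (EuclideanSpace ℝ (Fin N)))
    (hΩopen : IsOpen Ω) (hΩconn : IsConnected Ω) (hΩbdd : IsBounded Ω)
    (m : EuclideanSpace ℝ (Fin N) → ℝ) (hmcont : ContinuousOn m Ω)
    (f : ℝ → ℝ) (k₁ k₂ p : ℝ) (hf : SatisfiesH1 f k₁ k₂ p)
    (u : EuclideanSpace ℝ (Fin N) → ℝ)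
    (hucont : ContinuousOn u (closure Ω)) (huC2 : ContDiffOn ℝ 2 u Ω)
    (hueq : ∀ x ∈ Ω, -lap u x = m x * f (u x))
    (hupos : ∀ x ∈ Ω, 0 < u x) (hubc : ∀ x ∈ frontier Ω, u x = 0) :
    ∀ (x₀ : EuclideanSpace ℝ (Fin N)) (R : ℝ), 0 < R → ball x₀ R ⊆ Ω →
      (∀ x ∈ ball x₀ R, m x ≤ 0) →
      k₁ * ((1 - p) ^ 2 / (2 * ((N : ℝ) * (1 - p) + 2 * p))) *
          sInf ((fun y => max (-m y) 0) '' ball x₀ R) * R ^ 2 <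
        (sSup (u '' Ω)) ^ (1 - p) := by
  intro x₀ R hR hball hm
  obtain ⟨-, -, hk₁, -, hp0, hp1, hfb⟩ := hf
  have hq : 0 < 1 - p := by linarith
  set c := sInf ((fun y => max (-m y) 0) '' ball x₀ R) with hc
  set M := sSup (u '' Ω) with hM
  set D := (N : ℝ) * (1 - p) + 2 * p with hD
  have hDpos : 0 < D := by positivity
  set B := k₁ * ((1 - p) ^ 2 / (2 * D)) * c with hB
  have hx₀ : x₀ ∈ Ω := hball (mem_ball_self hR)
  have hbdd : BddAbove (u '' Ω) :=
    ((hΩbdd.isCompact_closure.image_of_continuousOn hucont).bddAbove).mono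
      (image_mono subset_closure)
  have huM : ∀ x ∈ Ω, u x ≤ M := fun x hx => le_csSup hbdd (mem_image_of_mem u hx)
  have hMpos : 0 < M := (hupos x₀ hx₀).trans_le (huM x₀ hx₀)
  have hcl : ∀ x ∈ closure Ω, 0 ≤ u x ∧ u x ≤ M := by
    intro x hx
    by_cases hxΩ : x ∈ Ω
    · exact ⟨(hupos x hxΩ).le, huM x hxΩ⟩
    · have : u x = 0 := hubc x ⟨hx, by rwa [hΩopen.interior_eq]⟩
      exact ⟨this.ge, this.trans_le hMpos.le⟩
  have hc0 : 0 ≤ c := by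
    apply Real.sInf_nonneg
    rintro _ ⟨y, -, rfl⟩
    exact le_max_right _ _
  have hcm : ∀ x ∈ ball x₀ R, c ≤ -m x := by
    intro x hx
    have : c ≤ max (-m x) 0 := csInf_le ⟨0, by rintro _ ⟨y, -, rfl⟩; exact le_max_right _ _⟩
      (mem_image_of_mem (fun y => max (-m y) 0) hx)
    rwa [max_eq_left (by linarith [hm x hx])] at this
  by_contra! hcon
  have hMq : 0 < M ^ (1 - p) := Real.rpow_pos_of_pos hMpos _
  have hBpos : 0 < B := by
    by_contra! hB0
    nlinarith [sq_nonneg R]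
  have hcb : closedBall x₀ R ⊆ closure Ω := by
    rw [← closure_ball x₀ hR.ne']; exact closure_mono hball
  have hcont : ContinuousOn (fun x => u x ^ (1 - p) - B * ‖x - x₀‖ ^ 2) (closedBall x₀ R) := by
    refine ((hucont.mono hcb).rpow_const fun x _ => Or.inr hq.le).sub ?_
    fun_prop
  obtain ⟨x₁, hx₁, hmax⟩ := (isCompact_closedBall x₀ R).exists_isMaxOn
    ⟨x₀, mem_closedBall_self hR.le⟩ hcont
  set μ := u x₁ ^ (1 - p) - B * ‖x₁ - x₀‖ ^ 2 with hμ
  have hμpos : 0 < μ := by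
    have h1 : u x₀ ^ (1 - p) - B * ‖x₀ - x₀‖ ^ 2 ≤ μ := hmax (mem_closedBall_self hR.le)
    have h2 : 0 < u x₀ ^ (1 - p) := Real.rpow_pos_of_pos (hupos x₀ hx₀) _
    simp at h1
    linarith
  have hx₁b : x₁ ∈ ball x₀ R := by
    by_contra hnot
    have hdist : ‖x₁ - x₀‖ = R := by
      rw [← dist_eq_norm]
      exact le_antisymm (mem_closedBall.1 hx₁) (not_lt.1 fun h => hnot (mem_ball.2 h))
    have h1 : u x₁ ^ (1 - p) ≤ M ^ (1 - p) :=
      Real.rpow_le_rpow (hcl x₁ (hcb hx₁)).1 (hcl x₁ (hcb hx₁)).2 hq.le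
    rw [hdist] at hμ
    linarith
  have hx₁Ω : x₁ ∈ Ω := hball hx₁b
  set s := 1 / (1 - p) with hs
  have hps : (1 - p) * s = 1 := by rw [hs]; field_simp
  have hspos : 0 < s := by positivity
  have hs1 : s - 1 = s * p := by linarith
  set P := μ + B * ‖x₁ - x₀‖ ^ 2 with hP
  have hPpos : 0 < P := by positivity
  have hPu : P = u x₁ ^ (1 - p) := by rw [hP, hμ]; ring
  have huP : u x₁ = P ^ s := by
    rw [hPu, ← Real.rpow_mul (hupos x₁ hx₁Ω).le, hps, Real.rpow_one]
  have hle : ∀ᶠ y in nhds x₁, u y ≤ (μ + B * ‖y - x₀‖ ^ 2) ^ s := by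
    filter_upwards [isOpen_ball.mem_nhds hx₁b] with y hy
    have h1 : u y ^ (1 - p) - B * ‖y - x₀‖ ^ 2 ≤ μ := hmax (ball_subset_closedBall hy)
    have h0 : 0 ≤ u y := (hupos y (hball hy)).le
    calc u y = (u y ^ (1 - p)) ^ s := by rw [← Real.rpow_mul h0, hps, Real.rpow_one]
      _ ≤ _ := Real.rpow_le_rpow (Real.rpow_nonneg h0 _) (by linarith) hspos.le
  have hlap := lap_le_of_touching (huC2.contDiffAt (hΩopen.mem_nhds hx₁Ω)) hPpos hle huP
  rw [← hP] at hlap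
  have hlow : c * (k₁ * P ^ (s - 1)) ≤ lap u x₁ := by
    have h1 := (hfb (u x₁) (hupos x₁ hx₁Ω).le).1
    have h2 : u x₁ ^ p = P ^ (s - 1) := by rw [huP, ← Real.rpow_mul hPpos.le, hs1]
    rw [h2] at h1
    have h3 := hueq x₁ hx₁Ω
    have h4 : lap u x₁ = -m x₁ * f (u x₁) := by linarith
    rw [h4]
    exact mul_le_mul (hcm x₁ hx₁b) h1 (by positivity) (hc0.trans (hcm x₁ hx₁b))
  have hQ : 0 < P ^ (s - 2) := Real.rpow_pos_of_pos hPpos _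
  have hPQ : P ^ (s - 1) = P * P ^ (s - 2) := by
    rw [show s - 1 = 1 + (s - 2) by ring, Real.rpow_add hPpos, Real.rpow_one]
  have hfin : c * k₁ * P ≤ s * (s - 1) * (4 * B * (B * ‖x₁ - x₀‖ ^ 2)) + N * (s * P * (2 * B)) := by
    rw [hPQ] at hlow hlap
    refine le_of_mul_le_mul_right ?_ hQ
    linarith
  -- The constant `C_{N,p}` is the reciprocal of `2Ns + 4s(s-1)`.
  have hck : c * k₁ = B * (2 * N * s + 4 * s * (s - 1)) := by
    rw [hB, hs]
    field_simp
    rw [hD]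
    ring
  have hlt : B * ‖x₁ - x₀‖ ^ 2 < P := by linarith
  have hpos : 0 < s * (s - 1) * (4 * B) := by rw [hs1]; positivity
  have := mul_lt_mul_of_pos_left hlt hpos
  rw [hck] at hfin
  linarith
end

section
/- Let Ω ⊂ ℝ^N (N ≥ 1) be a bounded domain, let m : Ω → ℝ be continuous, and let f satisfy H1 with constants k₁, k₂ > 0 and p ∈ (0,1). Let Ω₁ ⊂ Ω be a nonempty bounded convex open set such that m is convex and m ≤ 0 on Ω₁. Suppose u ∈ C(Ω̄) ∩ C²(Ω) satisfies -Δu = m f(u) in Ω, u > 0 in Ω, and u = 0 on ∂Ω. Then (4 k₁ C_{N,p} / 27) · ∫_{Ω₁} m⁻(x) δ_{Ω₁}(x)² dx < |Ω₁| · (sup_Ω u)^{1-p}, where |Ω₁| is the Lebesgue measure of Ω₁. (Core estimate of Corollary 3.3.) -/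
/-!
The estimate holds pointwise: with `δ = dist(x₀, ∂Ω₁)`, every `x₀ ∈ Ω₁` satisfies
`(4 k₁ C_{N,p} / 27) m⁻(x₀) δ² < (sup u) ^ (1 - p)` (`pointwise_estimate`), and the theorem follows by
integrating over `Ω₁`, which has positive finite measure.

The pointwise bound is a comparison argument on the ball `B` of radius `r = 2δ/3` about `x₀`. Since
`m⁻` is concave and nonnegative on the ball of radius `δ`, `m⁻ ≥ m⁻(x₀) / 3` on `B`. Put
`c = k₁ C_{N,p} m⁻(x₀) / 3`. If the bound fails, then `u ^ (1 - p) ≤ c r²` on `∂B`, so that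
`u ^ (1 - p) - c |x - x₀|²`, which is positive at `x₀`, attains its maximum over `B` at an interior
point `y`. The first- and second-order conditions at `y` give `Δu(y) < (c / C_{N,p}) u(y) ^ p`
(`lap_bound`), whereas the equation gives
`Δu(y) = m⁻(y) f(u(y)) ≥ (m⁻(x₀) / 3) k₁ u(y) ^ p`: a contradiction.
-/

open MeasureTheory Metric Set Bornology

/-- If `b > 0`, the second-derivative test makes `0` a local minimum as well, so `φ` is locally
constant and its second derivative vanishes. -/
lemma second_deriv_nonpos_of_isLocalMax_s12 {φ φ' : ℝ → ℝ} {b : ℝ}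
    (h1 : ∀ᶠ t in nhds (0 : ℝ), HasDerivAt φ (φ' t) t) (h2 : HasDerivAt φ' b 0)
    (hmax : IsLocalMax φ 0) : b ≤ 0 := by
  by_contra! hb
  have hd : deriv φ =ᶠ[nhds 0] φ' := h1.mono fun t ht => ht.deriv
  have hdd : deriv (deriv φ) 0 = b := by rw [hd.deriv_eq, h2.deriv]
  have hmin : IsLocalMin φ 0 :=
    isLocalMin_of_deriv_deriv_pos (by rw [hdd]; exact hb) hmax.deriv_eq_zero
      h1.self_of_nhds.continuousAt
  have hconst : φ =ᶠ[nhds 0] fun _ => φ 0 := by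
    filter_upwards [hmin, hmax] with t h h' using le_antisymm h' h
  have h0 : deriv (deriv φ) 0 = 0 := by
    rw [hconst.deriv.deriv_eq]; simp
  linarith

/-- First- and second-order conditions at a maximum of `U ^ (1 - p)` minus a quadratic with leading
coefficient `c`. The restriction of `u ^ (1 - p) - c ‖· - x₀‖²` to a line is of this form. -/
lemma one_dim_test {U U' : ℝ → ℝ} {b c d e p : ℝ}
    (hU : ∀ᶠ t in nhds (0 : ℝ), HasDerivAt U (U' t) t) (hU' : HasDerivAt U' b 0)
    (hpos : 0 < U 0)
    (hmax : IsLocalMax (fun t => U t ^ (1 - p) - c * (e + 2 * t * d + t ^ 2)) 0) :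
    (1 - p) * U 0 ^ (-p) * U' 0 = 2 * c * d ∧
      (1 - p) * U 0 ^ (-p) * b ≤ 2 * c + p * (1 - p) * U 0 ^ (-p - 1) * U' 0 ^ 2 := by
  have hcont : ContinuousAt U 0 := hU.self_of_nhds.continuousAt
  have hposn : ∀ᶠ t in nhds (0 : ℝ), 0 < U t := hcont.eventually (lt_mem_nhds hpos)
  have h1 : ∀ᶠ t in nhds (0 : ℝ),
      HasDerivAt (fun t => U t ^ (1 - p) - c * (e + 2 * t * d + t ^ 2))
        ((1 - p) * U t ^ (-p) * U' t - 2 * c * (d + t)) t := by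
    filter_upwards [hU, hposn] with t ht hpt
    have hA := ht.rpow_const (p := 1 - p) (Or.inl hpt.ne')
    have hB : HasDerivAt (fun t : ℝ => c * (e + 2 * t * d + t ^ 2)) (2 * c * (d + t)) t := by
      have := (((((hasDerivAt_id t).const_mul 2).mul_const d).const_add e).add
        ((hasDerivAt_id t).pow 2)).const_mul c
      refine this.congr_deriv ?_
      simp; ring
    refine (hA.sub hB).congr_deriv ?_
    rw [show 1 - p - 1 = -p by ring]; ring
  have h2 : HasDerivAt (fun t => (1 - p) * U t ^ (-p) * U' t - 2 * c * (d + t))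
      ((1 - p) * (U' 0 * (-p) * U 0 ^ (-p - 1)) * U' 0 + (1 - p) * U 0 ^ (-p) * b - 2 * c * 1)
      0 :=
    (((hU.self_of_nhds.rpow_const (p := -p) (Or.inl hpos.ne')).const_mul (1 - p)).mul hU').sub
      (((hasDerivAt_id (0:ℝ)).const_add d).const_mul (2 * c))
  have hz := hmax.hasDerivAt_eq_zero h1.self_of_nhds
  have hs := second_deriv_nonpos_of_isLocalMax_s12 h1 h2 hmax
  constructor
  · simp at hz; linarith
  · nlinarith

/-- Where `u ^ (1 - p) - c ‖· - x₀‖²` has a positive local maximum, `Δu < (c / C_{N,p}) u ^ p`, with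
`C_{N,p} = (1 - p)² / (2 (N (1 - p) + 2 p))`. The strict inequality comes from `p > 0` and the
positivity of the maximum. -/
lemma lap_bound {N : ℕ} {u : EuclideanSpace ℝ (Fin N) → ℝ}
    {x₀ y : EuclideanSpace ℝ (Fin N)} {c p : ℝ} (hp0 : 0 < p) (hp1 : p < 1) (hc : 0 < c)
    (hu : ContDiffAt ℝ 2 u y) (hpos : 0 < u y)
    (hmax : IsLocalMax (fun z => u z ^ (1 - p) - c * ‖z - x₀‖ ^ 2) y)
    (hgt : c * ‖y - x₀‖ ^ 2 < u y ^ (1 - p)) :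
    (1 - p) ^ 2 * lap u y < c * (2 * (N * (1 - p) + 2 * p)) * u y ^ p := by
  set a : Fin N → ℝ := fun i => fderiv ℝ u y (EuclideanSpace.single i 1) with ha
  set b : Fin N → ℝ := fun i =>
    fderiv ℝ (fun y => fderiv ℝ u y (EuclideanSpace.single i 1)) y (EuclideanSpace.single i 1)
    with hb
  have key : ∀ i, (1 - p) * u y ^ (-p) * a i = 2 * c * (y - x₀) i ∧
      (1 - p) * u y ^ (-p) * b i ≤ 2 * c + p * (1 - p) * u y ^ (-p - 1) * a i ^ 2 := by
    intro i
    set E : EuclideanSpace ℝ (Fin N) := EuclideanSpace.single i 1 with hE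
    have hline : ∀ t : ℝ, HasDerivAt (fun t : ℝ => y + t • E) E t := fun t => by
      simpa using ((hasDerivAt_id t).smul_const E).const_add y
    have hl0 : Filter.Tendsto (fun t : ℝ => y + t • E) (nhds 0) (nhds y) := by
      simpa using (hline 0).continuousAt.tendsto
    have hd1 : ∀ᶠ z in nhds y, DifferentiableAt ℝ u z := by
      filter_upwards [hu.eventually (by simp)] with z hz
      exact hz.differentiableAt (by norm_num)
    have hd2 : DifferentiableAt ℝ (fun z => fderiv ℝ u z E) y := by
      have : ContDiffAt ℝ 1 (fderiv ℝ u) y := hu.fderiv_right (by norm_num)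
      exact (this.differentiableAt (by norm_num)).clm_apply (differentiableAt_const E)
    have hU : ∀ᶠ t in nhds (0 : ℝ),
        HasDerivAt (fun t : ℝ => u (y + t • E)) (fderiv ℝ u (y + t • E) E) t := by
      filter_upwards [hl0.eventually hd1] with t ht
      exact ht.hasFDerivAt.comp_hasDerivAt t (hline t)
    have hU' : HasDerivAt (fun t : ℝ => fderiv ℝ u (y + t • E) E) (b i) 0 := by
      have h := hd2.hasFDerivAt
      rw [show y = y + (0 : ℝ) • E by simp] at h
      have := h.comp_hasDerivAt 0 (hline 0)
      simpa [hb, Function.comp_def] using this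
    have hm : IsLocalMax (fun t : ℝ => u (y + t • E) ^ (1 - p) -
        c * (‖y - x₀‖ ^ 2 + 2 * t * (y - x₀) i + t ^ 2)) 0 := by
      have h := hl0.eventually hmax
      refine h.mono fun t ht => ?_
      have hn : ‖y + t • E - x₀‖ ^ 2 = ‖y - x₀‖ ^ 2 + 2 * t * (y - x₀) i + t ^ 2 := by
        rw [show y + t • E - x₀ = (y - x₀) + t • E by abel, norm_add_sq_real,
          inner_smul_right, norm_smul, hE, EuclideanSpace.inner_single_right]
        simp
        ring
      simp only [hn] at ht
      simpa using ht
    have := one_dim_test hU hU' (by simpa using hpos) hm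
    simpa using this
  have hs : (1 - p) * u y ^ (-p) * lap u y ≤
      2 * c * N + p * (1 - p) * u y ^ (-p - 1) * ∑ i, a i ^ 2 := by
    have := Finset.sum_le_sum fun i (_ : i ∈ Finset.univ) => (key i).2
    rw [← Finset.mul_sum, Finset.sum_add_distrib, ← Finset.mul_sum Finset.univ (fun i => a i ^ 2)]
      at this
    simp only [Finset.sum_const, Finset.card_univ, Fintype.card_fin, nsmul_eq_mul] at this
    have e : lap u y = ∑ i, b i := rfl
    rw [e]; linarith
  have hg : ((1 - p) * u y ^ (-p)) ^ 2 * ∑ i, a i ^ 2 = 4 * c ^ 2 * ‖y - x₀‖ ^ 2 := by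
    rw [EuclideanSpace.real_norm_sq_eq, Finset.mul_sum, Finset.mul_sum]
    refine Finset.sum_congr rfl fun i _ => ?_
    rw [← mul_pow, (key i).1]; ring
  -- express all powers of `u y` through `u y` and `P = u y ^ p`
  have hP : 0 < u y ^ p := Real.rpow_pos_of_pos hpos p
  have e1 : u y ^ (-p) = (u y ^ p)⁻¹ := Real.rpow_neg hpos.le p
  have e2 : u y ^ (-p - 1) = (u y ^ p)⁻¹ / u y := by
    rw [Real.rpow_sub hpos, Real.rpow_one, e1]
  have e3 : u y ^ (1 - p) = u y / u y ^ p := by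
    rw [Real.rpow_sub hpos, Real.rpow_one]
  rw [e1, e2] at hs
  rw [e1] at hg
  rw [e3] at hgt
  generalize u y ^ p = P at *
  generalize ∑ i, a i ^ 2 = A at *
  generalize ‖y - x₀‖ ^ 2 = D at *
  generalize u y = v at *
  generalize lap u y = L at *
  have hq : 0 < 1 - p := by linarith
  rw [lt_div_iff₀ hP] at hgt
  have hg' : (1 - p) ^ 2 * A = 4 * c ^ 2 * D * P ^ 2 := by
    field_simp at hg; linarith
  have hs' : (1 - p) * L * v ≤ 2 * c * N * P * v + p * (1 - p) * A := by
    have := mul_le_mul_of_nonneg_right hs (mul_pos hP hpos).le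
    have l : (1 - p) * P⁻¹ * L * (P * v) = (1 - p) * L * v := by field_simp
    have r : (2 * c * N + p * (1 - p) * (P⁻¹ / v) * A) * (P * v) =
      2 * c * N * P * v + p * (1 - p) * A := by field_simp
    rwa [l, r] at this
  have h3 : 4 * c * p * P * (c * D * P) < 4 * c * p * P * v :=
    mul_lt_mul_of_pos_left hgt (by positivity)
  have h4 := mul_le_mul_of_nonneg_left hs' hq.le
  refine lt_of_mul_lt_mul_right (a := v) ?_ hpos.le
  have h5 : p * ((1 - p) ^ 2 * A) = p * (4 * c ^ 2 * D * P ^ 2) := by rw [hg']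
  nlinarith

/-- The ball is connected and misses the frontier of `s`. If the frontier is empty, `infDist` is `0`
and so the ball is empty. -/
lemma ball_infDist_frontier_subset {E : Type*} [NormedAddCommGroup E] [NormedSpace ℝ E]
    {s : Set E} {x : E} (hx : x ∈ s) : ball x (infDist x (frontier s)) ⊆ s := by
  intro y hy
  by_contra hys
  have hr : 0 < infDist x (frontier s) := pos_of_mem_ball hy
  obtain ⟨z, hz, hzf⟩ := isPreconnected_closed_iff.1
    (convex_ball x (infDist x (frontier s))).isPreconnected (closure s) (closure sᶜ)
    isClosed_closure isClosed_closure
    (fun z _ => (em (z ∈ s)).imp (fun h => subset_closure h) (fun h => subset_closure h))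
    ⟨x, mem_ball_self hr, subset_closure hx⟩ ⟨y, hy, subset_closure hys⟩
  rw [← frontier_eq_closure_inter_closure] at hzf
  have := infDist_le_dist_of_mem (x := x) hzf
  rw [mem_ball, dist_comm] at hz
  linarith

/-- Pointwise form of the estimate; integrating it over `s` gives the theorem. The radius `2δ/3`
maximises `r² (1 - r/δ)`, with maximum `4δ²/27`. -/
lemma pointwise_estimate {N : ℕ} {s : Set (EuclideanSpace ℝ (Fin N))}
    {m u : EuclideanSpace ℝ (Fin N) → ℝ} {f : ℝ → ℝ} {k₁ p S : ℝ}
    (hk : 0 < k₁) (hp0 : 0 < p) (hp1 : p < 1)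
    (hf : ∀ ξ : ℝ, 0 ≤ ξ → k₁ * ξ ^ p ≤ f ξ)
    (hs : IsOpen s) (hmconv : ConvexOn ℝ s m) (hm : ∀ x ∈ s, m x ≤ 0)
    (hu : ContDiffOn ℝ 2 u s) (heq : ∀ x ∈ s, -lap u x = m x * f (u x))
    (hpos : ∀ x ∈ s, 0 < u x) (hS : ∀ x ∈ s, u x ≤ S)
    {x₀ : EuclideanSpace ℝ (Fin N)} (hx₀ : x₀ ∈ s) :
    4 * k₁ * ((1 - p) ^ 2 / (2 * ((N : ℝ) * (1 - p) + 2 * p))) / 27 *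
      (max (-m x₀) 0 * infDist x₀ (frontier s) ^ 2) < S ^ (1 - p) := by
  set δ := infDist x₀ (frontier s) with hδ
  set K := 2 * ((N : ℝ) * (1 - p) + 2 * p) with hK
  have hq : 0 < 1 - p := by linarith
  have hKpos : 0 < K := by positivity
  have hSpos : 0 < S := (hpos x₀ hx₀).trans_le (hS x₀ hx₀)
  have hS1 : 0 < S ^ (1 - p) := Real.rpow_pos_of_pos hSpos _
  rw [max_eq_left (by linarith [hm x₀ hx₀])]
  by_contra! hcon
  have hprod : 0 < -m x₀ * δ ^ 2 := by
    by_contra! h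
    have : 4 * k₁ * ((1 - p) ^ 2 / K) / 27 * (-m x₀ * δ ^ 2) ≤ 0 :=
      mul_nonpos_of_nonneg_of_nonpos (by positivity) h
    linarith
  have hδ0 : 0 ≤ δ := infDist_nonneg
  have hδpos : 0 < δ := hδ0.lt_of_ne' fun h => by simp [h] at hprod
  have hMpos : 0 < -m x₀ := by
    by_contra! h
    nlinarith [sq_nonneg δ]
  set c := k₁ * ((1 - p) ^ 2 / K) * (-m x₀ / 3) with hc
  have hcpos : 0 < c := by positivity
  set r := 2 * δ / 3 with hr
  have hcr : S ^ (1 - p) ≤ c * r ^ 2 := by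
    refine hcon.trans (le_of_eq ?_)
    rw [hc, hr]; ring
  have hball : ball x₀ δ ⊆ s := ball_infDist_frontier_subset hx₀
  have hcb : closedBall x₀ r ⊆ s :=
    (closedBall_subset_ball (by rw [hr]; linarith)).trans hball
  have hcont : ContinuousOn (fun z => u z ^ (1 - p) - c * ‖z - x₀‖ ^ 2) (closedBall x₀ r) := by
    refine ((hu.continuousOn.mono hcb).rpow_const fun z _ => Or.inr hq.le).sub ?_
    fun_prop
  obtain ⟨y, hy, hymax⟩ := (isCompact_closedBall x₀ r).exists_isMaxOn
    ⟨x₀, mem_closedBall_self (by positivity)⟩ hcont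
  have hys := hcb hy
  have hgt : c * ‖y - x₀‖ ^ 2 < u y ^ (1 - p) := by
    have h0 := hymax (mem_closedBall_self (x := x₀) (by positivity : 0 ≤ r))
    have h1 := Real.rpow_pos_of_pos (hpos x₀ hx₀) (1 - p)
    simp only [mem_ofPred_eq, sub_self, norm_zero] at h0
    nlinarith
  have hlt : ‖y - x₀‖ < r := by
    have h1 : u y ^ (1 - p) ≤ S ^ (1 - p) :=
      Real.rpow_le_rpow (hpos y hys).le (hS y hys) hq.le
    have h2 : c * ‖y - x₀‖ ^ 2 < c * r ^ 2 := by linarith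
    exact lt_of_pow_lt_pow_left₀ 2 (by positivity) (lt_of_mul_lt_mul_left h2 hcpos.le)
  have hloc : IsLocalMax (fun z => u z ^ (1 - p) - c * ‖z - x₀‖ ^ 2) y :=
    hymax.isLocalMax (Filter.mem_of_superset (isOpen_ball.mem_nhds (by rwa [mem_ball, dist_eq_norm]))
      ball_subset_closedBall)
  have hlap := lap_bound hp0 hp1 hcpos (hu.contDiffAt (hs.mem_nhds hys)) (hpos y hys) hloc hgt
  -- `y` lies two thirds of the way from `x₀` to a point `z` of the ball of radius `δ`
  have hmy : m y ≤ m x₀ / 3 := by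
    set z := x₀ + (3 / 2 : ℝ) • (y - x₀) with hz
    have hzs : z ∈ s := by
      apply hball
      rw [mem_ball, dist_eq_norm, hz, add_sub_cancel_left, norm_smul]
      norm_num
      linarith
    have h := hmconv.2 hx₀ hzs (by norm_num : (0 : ℝ) ≤ 1 / 3) (by norm_num : (0 : ℝ) ≤ 2 / 3)
      (by norm_num)
    have hyz : (1 / 3 : ℝ) • x₀ + (2 / 3 : ℝ) • z = y := by
      rw [hz]; module
    rw [hyz] at h
    have := hm z hzs
    simp only [smul_eq_mul] at h
    linarith
  have hP : 0 < u y ^ p := Real.rpow_pos_of_pos (hpos y hys) p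
  have hL : (-m x₀ / 3) * (k₁ * u y ^ p) ≤ lap u y := by
    have h1 := heq y hys
    have h2 := hf (u y) (hpos y hys).le
    have : (-m x₀ / 3) * (k₁ * u y ^ p) ≤ (-m y) * f (u y) :=
      mul_le_mul (by linarith) h2 (by positivity) (by linarith)
    linarith
  have hcK : c * K = k₁ * (1 - p) ^ 2 * (-m x₀ / 3) := by
    rw [hc]; field_simp
  rw [hcK] at hlap
  have := mul_le_mul_of_nonneg_left hL (sq_nonneg (1 - p))
  nlinarith

/-- **Core estimate of Corollary 3.3.** If `u` solves `-Δu = m f(u)` in `Ω`, `u > 0` in `Ω`,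
`u = 0` on `∂Ω`, and `Ω₁ ⊆ Ω` is a nonempty bounded convex open set on which `m` is convex
and `m ≤ 0`, then `(4 k₁ C_{N,p} / 27) ∫_{Ω₁} m⁻ δ_{Ω₁}² < |Ω₁| (sup_Ω u)^{1-p}`. -/
theorem core_estimate_cor33 {N : ℕ} (hN : 1 ≤ N)
    (Ω : Set (EuclideanSpace ℝ (Fin N)))
    (hΩopen : IsOpen Ω) (hΩconn : IsConnected Ω) (hΩbdd : IsBounded Ω)
    (m : EuclideanSpace ℝ (Fin N) → ℝ) (hmcont : ContinuousOn m Ω)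
    (f : ℝ → ℝ) (k₁ k₂ p : ℝ) (hf : SatisfiesH1 f k₁ k₂ p)
    (Ω₁ : Set (EuclideanSpace ℝ (Fin N))) (hΩ₁sub : Ω₁ ⊆ Ω)
    (hΩ₁ne : Ω₁.Nonempty) (hΩ₁open : IsOpen Ω₁) (hΩ₁conv : Convex ℝ Ω₁)
    (hΩ₁bdd : IsBounded Ω₁)
    (hmconv : ConvexOn ℝ Ω₁ m) (hmnonpos : ∀ x ∈ Ω₁, m x ≤ 0)
    (u : EuclideanSpace ℝ (Fin N) → ℝ)
    (hucont : ContinuousOn u (closure Ω)) (huC2 : ContDiffOn ℝ 2 u Ω)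
    (hueq : ∀ x ∈ Ω, -lap u x = m x * f (u x))
    (hupos : ∀ x ∈ Ω, 0 < u x) (hubc : ∀ x ∈ frontier Ω, u x = 0) :
    (4 * k₁ * ((1 - p) ^ 2 / (2 * ((N : ℝ) * (1 - p) + 2 * p))) / 27) *
        ∫ x in Ω₁, max (-m x) 0 * infDist x (frontier Ω₁) ^ 2 <
      (volume Ω₁).toReal * (sSup (u '' Ω)) ^ (1 - p) := by
  obtain ⟨-, -, hk, -, hp0, hp1, hfb⟩ := hf
  set S := sSup (u '' Ω) with hSdef
  have hbdd : BddAbove (u '' Ω) :=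
    (hΩbdd.isCompact_closure.bddAbove_image hucont).mono (image_mono subset_closure)
  have hS : ∀ x ∈ Ω₁, u x ≤ S := fun x hx => le_csSup hbdd (mem_image_of_mem u (hΩ₁sub hx))
  set A := 4 * k₁ * ((1 - p) ^ 2 / (2 * ((N : ℝ) * (1 - p) + 2 * p))) / 27 with hA
  have hpt : ∀ x ∈ Ω₁, A * (max (-m x) 0 * infDist x (frontier Ω₁) ^ 2) < S ^ (1 - p) :=
    fun x hx => pointwise_estimate hk hp0 hp1 (fun ξ hξ => (hfb ξ hξ).1) hΩ₁open hmconv hmnonpos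
      (huC2.mono hΩ₁sub) (fun x hx => hueq x (hΩ₁sub hx)) (fun x hx => hupos x (hΩ₁sub hx)) hS hx
  have hq : 0 < 1 - p := by linarith
  have hA0 : 0 ≤ A := by positivity
  have hvol : volume Ω₁ ≠ ⊤ := hΩ₁bdd.measure_lt_top.ne
  have hcont : ContinuousOn (fun x => A * (max (-m x) 0 * infDist x (frontier Ω₁) ^ 2)) Ω₁ := by
    refine continuousOn_const.mul ((ContinuousOn.sup (hmcont.mono hΩ₁sub).neg
      continuousOn_const).mul ?_)
    exact ((continuous_infDist_pt _).pow 2).continuousOn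
  have hint : IntegrableOn (fun x => A * (max (-m x) 0 * infDist x (frontier Ω₁) ^ 2)) Ω₁ := by
    refine IntegrableOn.of_bound hvol.lt_top
      (hcont.aestronglyMeasurable hΩ₁open.measurableSet) (S ^ (1 - p)) ?_
    filter_upwards [ae_restrict_mem hΩ₁open.measurableSet] with x hx
    rw [Real.norm_of_nonneg (by positivity)]
    exact (hpt x hx).le
  have hconst : IntegrableOn (fun _ : EuclideanSpace ℝ (Fin N) => S ^ (1 - p)) Ω₁ :=
    integrableOn_const hvol
  have hpos : 0 < ∫ x in Ω₁,
      (S ^ (1 - p) - A * (max (-m x) 0 * infDist x (frontier Ω₁) ^ 2)) := by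
    refine (setIntegral_pos_iff_support_of_nonneg_ae ?_ (hconst.sub hint)).2 ?_
    · filter_upwards [ae_restrict_mem hΩ₁open.measurableSet] with x hx
      exact (sub_pos.2 (hpt x hx)).le
    · exact (hΩ₁open.measure_pos volume hΩ₁ne).trans_le <| measure_mono fun x hx =>
        ⟨Function.mem_support.2 (sub_pos.2 (hpt x hx)).ne', hx⟩
  rw [integral_sub hconst hint, integral_const_mul, setIntegral_const, smul_eq_mul] at hpos
  exact sub_pos.1 hpos
end
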